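/- Let ν be a lattice path and let T and T' be distinct ν-trees. Then T and T' differ by a single element (i.e., |T \ T'| = |T' \ T| = 1) if and only if one of them is obtained from the other by a right rotation. -/

import Mathlib

open scoped Classical

/-! Lattice paths: `true` = north step, `false` = east step. -/

def eastSteps (ν : List Bool) : ℕ := ν.count false
def northSteps (ν : List Bool) : ℕ := ν.count true

/-- Height at which the path first reaches abscissa `x`. -/
def heightAt : List Bool → ℕ → ℕ
  | _, 0 => 0
  | [], _ + 1 => 0
  | true :: rest, x + 1 => heightAt rest (x + 1) + 1
  | false :: rest, x + 1 => heightAt rest x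

/-- Lattice point of a path after `i` steps. -/
def pointAt (μ : List Bool) (i : ℕ) : ℕ × ℕ :=
  ((μ.take i).count false, (μ.take i).count true)

/-- The set `A_ν` of lattice points weakly above `ν`. -/
def APts (ν : List Bool) : Set (ℕ × ℕ) :=
  {p | p.1 ≤ eastSteps ν ∧ heightAt ν p.1 ≤ p.2 ∧ p.2 ≤ northSteps ν}

def Incompatible (ν : List Bool) (p q : ℕ × ℕ) : Prop :=
  (p.1 < q.1 ∧ p.2 < q.2 ∧ (q.1, p.2) ∈ APts ν) ∨
    (q.1 < p.1 ∧ q.2 < p.2 ∧ (p.1, q.2) ∈ APts ν)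

def Compatible (ν : List Bool) (p q : ℕ × ℕ) : Prop := ¬ Incompatible ν p q

def IsNuTree (ν : List Bool) (T : Set (ℕ × ℕ)) : Prop :=
  T ⊆ APts ν ∧ T.Pairwise (Compatible ν) ∧
    ∀ T', T' ⊆ APts ν → T'.Pairwise (Compatible ν) → T ⊆ T' → T' = T

def IsRightRotationAt (T T' : Set (ℕ × ℕ)) (q q' : ℕ × ℕ) : Prop :=
  ∃ x y x'' y', q = (x, y) ∧ q' = (x'', y') ∧ x < x'' ∧ y < y' ∧
    (x, y) ∈ T ∧ (x, y') ∈ T ∧ (x'', y) ∈ T ∧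
    (∀ b, y < b → b < y' → (x, b) ∉ T) ∧
    (∀ a, x < a → a < x'' → (a, y) ∉ T) ∧
    (∀ a, x < a → a < x'' → (a, y') ∉ T) ∧
    (∀ b, y < b → b < y' → (x'', b) ∉ T) ∧
    T' = (T \ {(x, y)}) ∪ {(x'', y')}

def IsRightRotation (T T' : Set (ℕ × ℕ)) : Prop :=
  ∃ q q', IsRightRotationAt T T' q q'

/-- Order relation of the rotation poset of ν-trees. -/
def TreeLE (ν : List Bool) : Set (ℕ × ℕ) → Set (ℕ × ℕ) → Prop :=
  Relation.ReflTransGen fun A B => IsNuTree ν A ∧ IsNuTree ν B ∧ IsRightRotation A B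

def IsNuPath (ν μ : List Bool) : Prop :=
  eastSteps μ = eastSteps ν ∧ northSteps μ = northSteps ν ∧
    ∀ i ≤ μ.length, pointAt μ i ∈ APts ν

noncomputable def horiz (ν : List Bool) (p : ℕ × ℕ) : ℕ :=
  sSup {k | (p.1 + k, p.2) ∈ APts ν}

/-- Covering relation of the ν-Tamari lattice. -/
def TamariCover (ν μ μ' : List Bool) : Prop :=
  IsNuPath ν μ ∧ IsNuPath ν μ' ∧
    ∃ i j, 0 < i ∧ i < j ∧ j ≤ μ.length ∧
      μ.getD (i - 1) true = false ∧ μ.getD i false = true ∧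
      horiz ν (pointAt μ j) = horiz ν (pointAt μ i) ∧
      (∀ k, i < k → k < j → horiz ν (pointAt μ k) ≠ horiz ν (pointAt μ i)) ∧
      μ' = μ.take (i - 1) ++ (μ.drop i).take (j - i) ++ [false] ++ μ.drop j

def TamariLE (ν : List Bool) : List Bool → List Bool → Prop :=
  Relation.ReflTransGen (TamariCover ν)

/-! Flushing maps -/

def rowAvail (ν : List Bool) (y : ℕ) : List ℕ :=
  ((List.range (eastSteps ν + 1)).filter fun x => decide (heightAt ν x ≤ y)).reverse

def pointsAtHeight (μ : List Bool) (y : ℕ) : ℕ :=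
  ((List.range (μ.length + 1)).filter fun i => decide ((μ.take i).count true = y)).length

def rflushAux (ν : List Bool) : List ℕ → ℕ → List ℕ → List (ℕ × ℕ)
  | [], _, _ => []
  | c :: rest, y, forbidden =>
    let placed := ((rowAvail ν y).filter fun x => decide (x ∉ forbidden)).take c
    placed.map (fun x => (x, y)) ++ rflushAux ν rest (y + 1) (forbidden ++ placed.dropLast)

/-- Right-flushing map `R`. -/
def Rflush (ν μ : List Bool) : Set (ℕ × ℕ) :=
  {p | p ∈ rflushAux ν ((List.range (northSteps ν + 1)).map (pointsAtHeight μ)) 0 []}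

def lflushAux (m : ℕ) : List ℕ → ℕ → List ℕ → List (ℕ × ℕ)
  | [], _, _ => []
  | c :: rest, y, forbidden =>
    let placed := ((List.range (m + 1)).filter fun x => decide (x ∉ forbidden)).take c
    placed.map (fun x => (x, y)) ++ lflushAux m rest (y + 1) (forbidden ++ placed.dropLast)

noncomputable def rowCount (T : Set (ℕ × ℕ)) (y : ℕ) : ℕ := {x | (x, y) ∈ T}.ncard

/-- Left-flushing map `L`. -/
noncomputable def Lflush (ν : List Bool) (T : Set (ℕ × ℕ)) : Set (ℕ × ℕ) :=
  {p | p ∈ lflushAux (eastSteps ν) ((List.range (northSteps ν + 1)).map (rowCount T)) 0 []}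

def pathPointSet (μ : List Bool) : Set (ℕ × ℕ) := {p | ∃ i ≤ μ.length, pointAt μ i = p}

/-! Bracket vectors (0-indexed positions `0,…,ℓ`). -/

noncomputable def fpos (ν : List Bool) (k : ℕ) : ℕ :=
  sSup {i | i ≤ ν.length ∧ (ν.take i).count true = k}

def bmin (ν : List Bool) : List ℕ :=
  (List.range (ν.length + 1)).map fun i => (ν.take i).count true

def IsBracketVector (ν : List Bool) (b : List ℕ) : Prop :=
  b.length = ν.length + 1 ∧
    (∀ k ≤ northSteps ν, b.getD (fpos ν k) 0 = k) ∧
    (∀ i < b.length, (bmin ν).getD i 0 ≤ b.getD i 0 ∧ b.getD i 0 ≤ northSteps ν) ∧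
    ∀ i j k, i < j → j < k → k < b.length →
      ¬(b.getD i 0 = b.getD k 0 ∧ b.getD i 0 < b.getD j 0)

noncomputable def leftChild (T : Set (ℕ × ℕ)) (p : ℕ × ℕ) : Option (ℕ × ℕ) :=
  if ∃ b, (p.1, b) ∈ T ∧ b < p.2 then some (p.1, sSup {b | (p.1, b) ∈ T ∧ b < p.2})
  else none

noncomputable def rightChild (T : Set (ℕ × ℕ)) (p : ℕ × ℕ) : Option (ℕ × ℕ) :=
  if ∃ a, (a, p.2) ∈ T ∧ p.1 < a then
    if ∃ b, (sInf {a | (a, p.2) ∈ T ∧ p.1 < a}, b) ∈ T ∧ p.2 < b then none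
    else some (sInf {a | (a, p.2) ∈ T ∧ p.1 < a}, p.2)
  else none

noncomputable def inorderAux (T : Set (ℕ × ℕ)) : ℕ → ℕ × ℕ → List (ℕ × ℕ)
  | 0, _ => []
  | fuel + 1, p =>
    (match leftChild T p with
      | none => []
      | some l => inorderAux T fuel l) ++ p ::
      (match rightChild T p with
        | none => []
        | some r => inorderAux T fuel r)

/-- Bracket vector of a ν-tree: y-coordinates read in in-order from the root `(0,n)`. -/
noncomputable def bracketOfTree (ν : List Bool) (T : Set (ℕ × ℕ)) : List ℕ :=
  (inorderAux T T.ncard (0, northSteps ν)).map Prod.snd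

noncomputable def bracketAssign (ν μ : List Bool) : List (ℕ × ℕ) :=
  ((List.range (northSteps ν + 1)).foldl
    (fun (st : List (ℕ × ℕ) × List ℕ) k =>
      let picked := ((st.2.filter fun i => decide (i ≤ fpos ν k)).reverse).take
        (pointsAtHeight μ k)
      (st.1 ++ picked.map fun i => (i, k), st.2.filter fun i => decide (i ∉ picked)))
    ([], List.range (ν.length + 1))).1

/-- Bracket vector of a ν-path. -/
noncomputable def bracketOfPath (ν μ : List Bool) : List ℕ :=
  (List.range (ν.length + 1)).map fun i => ((bracketAssign ν μ).lookup i).getD 0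

/-- Componentwise order on (equal length) integer vectors. -/
def listLE (b b' : List ℕ) : Prop :=
  b.length = b'.length ∧ ∀ i, b.getD i 0 ≤ b'.getD i 0

/-! Reversal -/

def revPath (ν : List Bool) : List Bool := ν.reverse.map fun s => !s

def revTree (ν : List Bool) (T : Set (ℕ × ℕ)) : Set (ℕ × ℕ) :=
  (fun p : ℕ × ℕ => (northSteps ν - p.2, eastSteps ν - p.1)) '' T

/-! Pipe dreams and subword complexes -/

def dOf (ν : List Bool) (p : ℕ × ℕ) : ℕ := p.1 + (northSteps ν - p.2)

def labelPerm (ν : List Bool) (p : ℕ × ℕ) : Equiv.Perm ℕ :=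
  Equiv.swap (dOf ν p + 1) (dOf ν p + 2)

/-- The points of `A_ν` in reading order: rows from bottom to top, each left to right. -/
def readingList (ν : List Bool) : List (ℕ × ℕ) :=
  ((List.range (northSteps ν + 1)).map fun y =>
    ((List.range (eastSteps ν + 1)).filter fun x => decide (heightAt ν x ≤ y)).map
      fun x => (x, y)).flatten

/-- The minimal ν-tree. -/
def TminSet (ν : List Bool) : Set (ℕ × ℕ) :=
  {p | p ∈ APts ν ∧ (p.1 = 0 ∨ ∃ i < ν.length, ν.getD i true = false ∧ p = pointAt ν (i + 1))}

noncomputable def prodOver (ν : List Bool) (C : Set (ℕ × ℕ)) : Equiv.Perm ℕ :=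
  (((readingList ν).filter fun p => decide (p ∈ C)).map (labelPerm ν)).prod

/-- Coxeter length: number of inversions. -/
noncomputable def lenInv (π : Equiv.Perm ℕ) : ℕ :=
  {q : ℕ × ℕ | q.1 < q.2 ∧ π q.2 < π q.1}.ncard

noncomputable def piNu (ν : List Bool) : Equiv.Perm ℕ := prodOver ν (APts ν \ TminSet ν)

def Qword (ν : List Bool) : List (Equiv.Perm ℕ) := (readingList ν).map (labelPerm ν)

noncomputable def prodAt (Q : List (Equiv.Perm ℕ)) (P : Finset ℕ) : Equiv.Perm ℕ :=
  (((List.range Q.length).filter fun i => decide (i ∈ P)).map fun i => Q.getD i 1).prod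

def IsFacet (Q : List (Equiv.Perm ℕ)) (π : Equiv.Perm ℕ) (I : Finset ℕ) : Prop :=
  I ⊆ Finset.range Q.length ∧
    prodAt Q (Finset.range Q.length \ I) = π ∧
    (Finset.range Q.length \ I).card = lenInv π

def IncFlip (Q : List (Equiv.Perm ℕ)) (π : Equiv.Perm ℕ) (I J : Finset ℕ) : Prop :=
  IsFacet Q π I ∧ IsFacet Q π J ∧ ∃ i ∈ I, ∃ j ∈ J, i < j ∧ I.erase i = J.erase j

def FlipLE (Q : List (Equiv.Perm ℕ)) (π : Equiv.Perm ℕ) : Finset ℕ → Finset ℕ → Prop :=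
  Relation.ReflTransGen (IncFlip Q π)

/-- The maximal ν-tree. -/
def TmaxSet (ν : List Bool) : Set (ℕ × ℕ) :=
  {p | (p.1 ≤ eastSteps ν ∧ p.2 = northSteps ν) ∨ ∃ i < ν.length, ν.getD i false = true ∧ p = pointAt ν i}

/-!
Suppose `T \ T' = {p}` and `T' \ T = {q}`. By maximality of `T` the points `p` and `q` are
incompatible, so, up to exchanging the trees, `p` is the southwest and `q` the northeast corner of a
rectangle inside `A_ν`. All other points of both trees are compatible with `p` and with `q`. Such
points are compatible with the two remaining corners, which therefore belong to `T` by maximality,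
and the only such points inside the rectangle are these two corners, so its sides carry no further
points of `T`. This is precisely the configuration of a right rotation at `p`. Conversely, the
southeast corner of a rotation lies in `T ⊆ A_ν`, which makes the new point incompatible with the
old one, hence absent from `T`.
-/

theorem sdiff_eq_singleton_and_sdiff_eq_singleton_iff {α : Type*} {s t : Set α} {a b : α} :
    s \ t = {a} ∧ t \ s = {b} ↔ a ∈ s ∧ b ∉ s ∧ t = (s \ {a}) ∪ {b} := by
  simp only [Set.ext_iff, Set.mem_sdiff, Set.mem_union, Set.mem_singleton_iff]
  grind

theorem heightAt_mono (ν : List Bool) : Monotone (heightAt ν) := by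
  induction ν with
  | nil =>
    rintro (_ | x) (_ | y) _ <;> exact le_rfl
  | cons s ν ih =>
    rintro (_ | x) (_ | y) hxy
    · exact le_rfl
    · exact Nat.zero_le _
    · exact absurd hxy (Nat.not_succ_le_zero x)
    · cases s with
      | true => exact Nat.succ_le_succ (ih hxy)
      | false => exact ih (Nat.le_of_succ_le_succ hxy)

theorem mem_APts_of_le {ν : List Bool} {p q : ℕ × ℕ} (hp : p ∈ APts ν) (hx : q.1 ≤ p.1)
    (hy : p.2 ≤ q.2) (hn : q.2 ≤ northSteps ν) : q ∈ APts ν :=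
  ⟨hx.trans hp.1, (heightAt_mono ν hx).trans (hp.2.1.trans hy), hn⟩

/-- The half of `Incompatible` in which `p` is the southwestern point. For `q ∈ A_ν` it says that
`p` and `q` are the southwest and northeast corners of a nondegenerate rectangle inside `A_ν`; since
`A_ν` is closed under moving north and west, only the southeast corner has to be tested. -/
def SpansRectangle (ν : List Bool) (p q : ℕ × ℕ) : Prop :=
  p.1 < q.1 ∧ p.2 < q.2 ∧ (q.1, p.2) ∈ APts ν

theorem incompatible_iff_spansRectangle {ν : List Bool} {p q : ℕ × ℕ} :
    Incompatible ν p q ↔ SpansRectangle ν p q ∨ SpansRectangle ν q p :=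
  Iff.rfl

section Compatible

variable {ν : List Bool} {p q r : ℕ × ℕ}

theorem Compatible.symm (h : Compatible ν p q) : Compatible ν q p :=
  fun hqp => h hqp.symm

theorem compatible_of_fst_eq (h : p.1 = q.1) : Compatible ν p q := by
  rintro (⟨hlt, -⟩ | ⟨hlt, -⟩)
  · exact hlt.ne h
  · exact hlt.ne' h

theorem compatible_of_snd_eq (h : p.2 = q.2) : Compatible ν p q := by
  rintro (⟨-, hlt, -⟩ | ⟨-, hlt, -⟩)
  · exact hlt.ne h
  · exact hlt.ne' h

namespace SpansRectangle

theorem not_compatible (h : SpansRectangle ν p q) : ¬ Compatible ν p q :=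
  fun hpq => hpq (Or.inl h)

theorem Icc_subset_APts (h : SpansRectangle ν p q) (hq : q ∈ APts ν) : Set.Icc p q ⊆ APts ν :=
  fun _ hr => mem_APts_of_le h.2.2 hr.2.1 hr.1.2 (hr.2.2.trans hq.2.2)

theorem compatible_southeast (h : SpansRectangle ν p q) (hp : Compatible ν p r)
    (hq : Compatible ν q r) : Compatible ν (q.1, p.2) r := by
  rintro (⟨hx, hy, hmem⟩ | ⟨hx, hy, hmem⟩)
  · exact hp (Or.inl ⟨h.1.trans hx, hy, hmem⟩)
  · exact hq (Or.inr ⟨hx, hy.trans h.2.1, hmem⟩)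

theorem compatible_northwest (h : SpansRectangle ν p q) (hqA : q ∈ APts ν)
    (hp : Compatible ν p r) (hq : Compatible ν q r) : Compatible ν (p.1, q.2) r := by
  have hrect := h.Icc_subset_APts hqA
  rintro (⟨hx, hy, hmem⟩ | ⟨hx, hy, hmem⟩) <;> dsimp only at hx hy hmem
  · rcases le_or_gt r.1 q.1 with hrq | hqr
    · exact hp (Or.inl ⟨hx, h.2.1.trans hy, hrect ⟨⟨hx.le, le_rfl⟩, ⟨hrq, h.2.1.le⟩⟩⟩)
    · exact hq (Or.inl ⟨hqr, hy, hmem⟩)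
  · rcases le_or_gt p.2 r.2 with hpr | hrp
    · exact hq (Or.inr ⟨hx.trans h.1, hy, hrect ⟨⟨h.1.le, hpr⟩, ⟨le_rfl, hy.le⟩⟩⟩)
    · exact hp (Or.inr ⟨hx, hrp, hmem⟩)

theorem eq_northwest_or_eq_southeast (h : SpansRectangle ν p q) (hqA : q ∈ APts ν)
    (hr : r ∈ Set.Icc p q) (hp : Compatible ν p r) (hq : Compatible ν q r) :
    r = (p.1, q.2) ∨ r = (q.1, p.2) := by
  have hrect := h.Icc_subset_APts hqA
  obtain ⟨⟨hpx, hpy⟩, hqx, hqy⟩ := hr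
  have not_northeast_of_p : ¬ (p.1 < r.1 ∧ p.2 < r.2) := fun ⟨hx, hy⟩ =>
    hp (Or.inl ⟨hx, hy, hrect ⟨⟨hpx, le_rfl⟩, ⟨hqx, h.2.1.le⟩⟩⟩)
  have not_southwest_of_q : ¬ (r.1 < q.1 ∧ r.2 < q.2) := fun ⟨hx, hy⟩ =>
    hq (Or.inr ⟨hx, hy, hrect ⟨⟨h.1.le, hpy⟩, ⟨le_rfl, hqy⟩⟩⟩)
  have hlt_x := h.1
  have hlt_y := h.2.1
  simp only [Prod.ext_iff]
  omega

end SpansRectangle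

end Compatible

section NuTree

variable {ν : List Bool} {T T' : Set (ℕ × ℕ)} {p q r : ℕ × ℕ}

namespace IsNuTree

theorem compatible (hT : IsNuTree ν T) (hp : p ∈ T) (hq : q ∈ T) : Compatible ν p q := by
  obtain rfl | hne := eq_or_ne p q
  · exact compatible_of_fst_eq rfl
  · exact hT.2.1 hp hq hne

theorem mem_of_forall_compatible (hT : IsNuTree ν T) (hp : p ∈ APts ν)
    (h : ∀ r ∈ T, Compatible ν p r) : p ∈ T := by
  have hinsert : insert p T = T :=
    hT.2.2 (insert p T) (Set.insert_subset hp hT.1)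
      (hT.2.1.insert fun r hr _ => ⟨h r hr, (h r hr).symm⟩) (Set.subset_insert p T)
  exact hinsert ▸ Set.mem_insert p T

theorem compatible_of_sdiff_eq_singleton (hT' : IsNuTree ν T') (hp : T \ T' = {p}) (hq : q ∈ T')
    (hr : r ∈ T) (hne : r ≠ p) : Compatible ν q r := by
  have hr' : r ∈ T' := by
    by_contra hr'
    exact hne (hp.subset ⟨hr, hr'⟩)
  exact hT'.compatible hq hr'

theorem incompatible_of_sdiff_eq_singleton (hT : IsNuTree ν T) (hT' : IsNuTree ν T')
    (hp : T \ T' = {p}) (hq : q ∈ T' \ T) : Incompatible ν p q := by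
  by_contra hpq
  refine hq.2 (hT.mem_of_forall_compatible (hT'.1 hq.1) fun r hr => ?_)
  obtain rfl | hne := eq_or_ne r p
  · exact Compatible.symm hpq
  · exact hT'.compatible_of_sdiff_eq_singleton hp hq.1 hr hne

theorem southeast_corner_mem (hT : IsNuTree ν T) (hT' : IsNuTree ν T') (hp : T \ T' = {p})
    (hq : q ∈ T') (h : SpansRectangle ν p q) : (q.1, p.2) ∈ T := by
  have hpT : p ∈ T := (hp.superset rfl).1
  refine hT.mem_of_forall_compatible h.2.2 fun r hr => ?_
  obtain rfl | hne := eq_or_ne r p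
  · exact compatible_of_snd_eq rfl
  · exact h.compatible_southeast (hT.compatible hpT hr)
      (hT'.compatible_of_sdiff_eq_singleton hp hq hr hne)

theorem northwest_corner_mem (hT : IsNuTree ν T) (hT' : IsNuTree ν T') (hp : T \ T' = {p})
    (hq : q ∈ T') (h : SpansRectangle ν p q) : (p.1, q.2) ∈ T := by
  have hpT : p ∈ T := (hp.superset rfl).1
  have hqA : q ∈ APts ν := hT'.1 hq
  have hcorner : (p.1, q.2) ∈ APts ν :=
    h.Icc_subset_APts hqA ⟨⟨le_rfl, h.2.1.le⟩, ⟨h.1.le, le_rfl⟩⟩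
  refine hT.mem_of_forall_compatible hcorner fun r hr => ?_
  obtain rfl | hne := eq_or_ne r p
  · exact compatible_of_fst_eq rfl
  · exact h.compatible_northwest hqA (hT.compatible hpT hr)
      (hT'.compatible_of_sdiff_eq_singleton hp hq hr hne)

theorem eq_corner_of_mem_Icc (hT : IsNuTree ν T) (hT' : IsNuTree ν T') (hp : T \ T' = {p})
    (hq : q ∈ T') (h : SpansRectangle ν p q) (hr : r ∈ T) (hrI : r ∈ Set.Icc p q) :
    r = p ∨ r = (p.1, q.2) ∨ r = (q.1, p.2) := by
  have hpT : p ∈ T := (hp.superset rfl).1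
  refine or_iff_not_imp_left.2 fun hne => ?_
  exact h.eq_northwest_or_eq_southeast (hT'.1 hq) hrI (hT.compatible hpT hr)
    (hT'.compatible_of_sdiff_eq_singleton hp hq hr hne)

theorem isRightRotationAt_of_sdiff_eq_singleton (hT : IsNuTree ν T) (hT' : IsNuTree ν T')
    (hp : T \ T' = {p}) (hq : T' \ T = {q}) (h : SpansRectangle ν p q) :
    IsRightRotationAt T T' p q := by
  obtain ⟨hpT, -, heq⟩ := sdiff_eq_singleton_and_sdiff_eq_singleton_iff.1 ⟨hp, hq⟩
  have hqT' : q ∈ T' := (hq.superset rfl).1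
  have hcorner {a b : ℕ} (hab : (a, b) ∈ T) (hpa : p.1 ≤ a) (hpb : p.2 ≤ b) (haq : a ≤ q.1)
      (hbq : b ≤ q.2) : a = p.1 ∧ b = p.2 ∨ a = p.1 ∧ b = q.2 ∨ a = q.1 ∧ b = p.2 := by
    simpa only [Prod.ext_iff] using
      hT.eq_corner_of_mem_Icc hT' hp hqT' h hab ⟨⟨hpa, hpb⟩, ⟨haq, hbq⟩⟩
  have hx := h.1
  have hy := h.2.1
  refine ⟨p.1, p.2, q.1, q.2, rfl, rfl, hx, hy, hpT, hT.northwest_corner_mem hT' hp hqT' h,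
    hT.southeast_corner_mem hT' hp hqT' h, fun b hpb hbq hmem => ?_, fun a hpa haq hmem => ?_,
    fun a hpa haq hmem => ?_, fun b hpb hbq hmem => ?_, heq⟩
  · have hpoint := hcorner hmem le_rfl hpb.le hx.le hbq.le
    omega
  · have hpoint := hcorner hmem hpa.le le_rfl haq.le hy.le
    omega
  · have hpoint := hcorner hmem hpa.le hy.le haq.le le_rfl
    omega
  · have hpoint := hcorner hmem hx.le hpb.le le_rfl hbq.le
    omega

end IsNuTree

namespace IsRightRotationAt

theorem spansRectangle (h : IsRightRotationAt T T' p q) (hT : T ⊆ APts ν) :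
    SpansRectangle ν p q := by
  obtain ⟨x, y, x'', y', rfl, rfl, hx, hy, -, -, hse, -⟩ := h
  exact ⟨hx, hy, hT hse⟩

theorem sdiff_eq_singleton (h : IsRightRotationAt T T' p q) (hT : IsNuTree ν T) :
    T \ T' = {p} ∧ T' \ T = {q} := by
  have hpq := (h.spansRectangle hT.1).not_compatible
  obtain ⟨x, y, x'', y', rfl, rfl, -, -, hp, -, -, -, -, -, -, hT'⟩ := h
  exact sdiff_eq_singleton_and_sdiff_eq_singleton_iff.2
    ⟨hp, fun hq => hpq (hT.compatible hp hq), hT'⟩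

end IsRightRotationAt

end NuTree

theorem differ_by_one_iff_rotation (ν : List Bool) (T T' : Set (ℕ × ℕ))
    (hT : IsNuTree ν T) (hT' : IsNuTree ν T') (hne : T ≠ T') :
    ((T \ T').ncard = 1 ∧ (T' \ T).ncard = 1) ↔
      (IsRightRotation T T' ∨ IsRightRotation T' T) := by
  simp only [Set.ncard_eq_one]
  constructor
  · rintro ⟨⟨p, hp⟩, q, hq⟩
    have hpq : SpansRectangle ν p q ∨ SpansRectangle ν q p :=
      incompatible_iff_spansRectangle.1
        (hT.incompatible_of_sdiff_eq_singleton hT' hp (hq.superset rfl))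
    exact hpq.imp (fun h => ⟨p, q, hT.isRightRotationAt_of_sdiff_eq_singleton hT' hp hq h⟩)
      (fun h => ⟨q, p, hT'.isRightRotationAt_of_sdiff_eq_singleton hT hq hp h⟩)
  · rintro (⟨p, q, h⟩ | ⟨q, p, h⟩)
    · obtain ⟨hp, hq⟩ := h.sdiff_eq_singleton hT
      exact ⟨⟨p, hp⟩, q, hq⟩
    · obtain ⟨hq, hp⟩ := h.sdiff_eq_singleton hT'
      exact ⟨⟨p, hp⟩, q, hq⟩
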